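/- Let u, w be ternary words over {0,1,2} with val_F(u) = val_F(w). Then val_F(u·0) − val_F(w·0) ∈ {−1, 0, +1}, i.e., appending the digit 0 to both words changes the difference of Fibonacci values by at most 1 in absolute value. -/

import Mathlib

/-- Fibonacci sequence with F 0 = 1, F 1 = 2. -/
def F (n : ℕ) : ℕ := Nat.fib (n + 2)

/-- Fibonacci extended to integer indices ≥ -2, with F_{-2} = 0, F_{-1} = 1. -/
def Fz (m : ℤ) : ℤ := ((m + 2).toNat.fib : ℤ)

/-- Fibonacci value of a word (most significant digit first):
`valF (w_{k-1} ⋯ w_0) = ∑ w_i F_i`. -/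
def valF : List ℕ → ℕ
  | [] => 0
  | a :: t => a * F t.length + valF t

/-- Fibonacci's complement value:
`valFc (w_{k-1} ⋯ w_0) = ∑ w_i F_i − w_{k-1} F_k`. -/
def valFc (w : List ℕ) : ℤ :=
  (valF w : ℤ) - (w.headD 0 : ℤ) * (F w.length : ℤ)

/-!
Let `φ > 0 > ψ` be the roots of `x² = x + 1`. Since `F (i + 1) - φ * F i = ψ ^ (i + 2)`,
appending a zero to `u = u_{k-1} ⋯ u_0` multiplies its value by `φ` up to the error
`∑ u_i * ψ ^ (i + 2)`. When all digits are at most `d ≥ 1`, this error lies strictly between `d`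
times the sum of the odd powers `ψ ^ 3 + ψ ^ 5 + ⋯ = -ψ ^ 2` and `d` times the sum of the even
powers `ψ ^ 2 + ψ ^ 4 + ⋯ = -ψ`, an interval of length `d * (ψ ^ 2 - ψ) = d`. For two words of
equal value the multiples of `φ` cancel, so the integer difference after appending zeros is less
than `d` in absolute value.
-/

open scoped goldenRatio

theorem F_succ_sub_goldenRatio_mul_F (n : ℕ) : (F (n + 1) : ℝ) - φ * F n = ψ ^ (n + 2) :=
  Real.fib_succ_sub_goldenRatio_mul_fib (n + 2)

/-- The golden defect of a word `u`: the error made when `val_F(u·0)` is predicted as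
`φ * val_F(u)`. -/
noncomputable def goldenDefect (u : List ℕ) : ℝ :=
  valF (u ++ [0]) - φ * valF u

@[simp]
theorem goldenDefect_nil : goldenDefect [] = 0 := by
  simp [goldenDefect, valF]

theorem goldenDefect_cons (a : ℕ) (u : List ℕ) :
    goldenDefect (a :: u) = a * ψ ^ (u.length + 2) + goldenDefect u := by
  rw [← F_succ_sub_goldenRatio_mul_F]
  simp only [goldenDefect, List.cons_append, valF, List.length_append, List.length_singleton,
    Nat.cast_add, Nat.cast_mul]
  ring

theorem goldenDefect_append_singleton (u : List ℕ) (a : ℕ) :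
    goldenDefect (u ++ [a]) = ψ * goldenDefect u + a * ψ ^ 2 := by
  induction u with
  | nil => simp [goldenDefect_cons]
  | cons b u ih =>
    simp only [List.cons_append, goldenDefect_cons, List.length_append, List.length_singleton, ih]
    ring

theorem goldenDefect_mem_Ioo {d : ℕ} (hd : 0 < d) {u : List ℕ} (hu : ∀ x ∈ u, x ≤ d) :
    goldenDefect u ∈ Set.Ioo (-(d * ψ ^ 2)) (-(d * ψ)) := by
  have hψ : ψ < 0 := Real.goldenConj_neg
  have hd' : (0 : ℝ) < d := mod_cast hd
  induction u using List.reverseRecOn with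
  | nil =>
    rw [goldenDefect_nil]
    exact ⟨neg_neg_of_pos (mul_pos hd' (sq_pos_of_neg hψ)),
      neg_pos.2 (mul_neg_of_pos_of_neg hd' hψ)⟩
  | append_singleton u a ih =>
    obtain ⟨hlower, hupper⟩ := ih fun x hx => hu x (List.mem_append_left _ hx)
    have had : (a : ℝ) ≤ d := mod_cast hu a (by simp)
    rw [goldenDefect_append_singleton]
    constructor
    · calc -(d * ψ ^ 2) = ψ * -(d * ψ) := by ring
        _ < ψ * goldenDefect u := mul_lt_mul_of_neg_left hupper hψ
        _ ≤ ψ * goldenDefect u + a * ψ ^ 2 := le_add_of_nonneg_right (by positivity)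
    · calc ψ * goldenDefect u + a * ψ ^ 2
          ≤ ψ * goldenDefect u + d * ψ ^ 2 := by gcongr
        _ < ψ * -(d * ψ ^ 2) + d * ψ ^ 2 :=
            add_lt_add_left (mul_lt_mul_of_neg_left hlower hψ) _
        _ = -(d * ψ) := by linear_combination -d * ψ * Real.goldenConj_sq

theorem abs_goldenDefect_sub_lt {d : ℕ} (hd : 0 < d) {u w : List ℕ} (hu : ∀ x ∈ u, x ≤ d)
    (hw : ∀ x ∈ w, x ≤ d) : |goldenDefect u - goldenDefect w| < d := by
  obtain ⟨hul, huu⟩ := goldenDefect_mem_Ioo hd hu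
  obtain ⟨hwl, hwu⟩ := goldenDefect_mem_Ioo hd hw
  have hlength : -(d * ψ) - -(d * ψ ^ 2) = d := by linear_combination d * Real.goldenConj_sq
  rw [abs_sub_lt_iff]
  constructor <;> linarith

theorem append_zero_diff_general {d : ℕ} (hd : 0 < d) {u w : List ℕ} (hu : ∀ x ∈ u, x ≤ d)
    (hw : ∀ x ∈ w, x ≤ d) (h : valF u = valF w) :
    |(valF (u ++ [0]) : ℤ) - (valF (w ++ [0]) : ℤ)| < d := by
  have hdefect := abs_goldenDefect_sub_lt hd hu hw
  rw [goldenDefect, goldenDefect, h, sub_sub_sub_cancel_right] at hdefect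
  exact_mod_cast hdefect

theorem append_zero_diff (u w : List ℕ) (hu : ∀ x ∈ u, x ≤ 2) (hw : ∀ x ∈ w, x ≤ 2)
    (h : valF u = valF w) :
    (valF (u ++ [0]) : ℤ) - (valF (w ++ [0]) : ℤ) ∈ ({-1, 0, 1} : Set ℤ) := by
  have hlt := abs_lt.1 (append_zero_diff_general two_pos hu hw h)
  simp only [Set.mem_insert_iff, Set.mem_singleton_iff]
  omega
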